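/- Let α ≥ 2 be a countable ordinal and n, m positive integers. Suppose g : [0,1] → [0,1] is a unimodal, locally eventually onto map with critical point c such that ω(c) ≃ ω^{α+1}·n + 1 and 𝓘 ≃ ω^{α+1}·m + 1. Then: (1) if n = 1 then m ≠ 2; (2) if n = 2 then 2 ≤ m and m ≠ 4; (3) if 2 ≤ n then n ≤ m. -/

import Mathlib

/-!
Let `A = ω(c)`, and let `T` and `S` be the Cantor–Bendixson derivatives of order `α + 1` of `A` and
of the set of inhomogeneities `𝓘 = lim← (g|A)`. In the ordinal space `ω ^ γ * k + 1` the `γ`-th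
derivative consists of the `k` nonzero multiples of `ω ^ γ` (`OrdSpace.ncard_cbDeriv`), so
`|T| = n` and `|S| = m`.

A continuous surjection of compact Hausdorff spaces maps the `γ`-th derivative of the source onto
a superset of the `γ`-th derivative of the target (`cbDeriv_subset_image`). Applied to the
projection `𝓘 → A` this gives `n ≤ m`; applied to `g : A → A` it shows that `g` permutes `T`;
applied to the shift homeomorphism of `𝓘` and its inverse it shows that the shift permutes the
finite set `S`, so that all threads in `S` are periodic.

A locally eventually onto unimodal map with infinite `ω(c)` has only one fixed point
(`fixed_unique`) and at most one 2-cycle (`cycle_unique`). If `n = 1`, then `T` is the fixed point,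
and `S` contains its constant thread; with `m = 2` the other thread would be fixed by the shift as
well, giving a second fixed point. If `n = 2`, then `T` is the 2-cycle, and `S` contains its two
threads; with `m = 4` the other two threads would have period dividing 2, hence both be the
constant thread of the one fixed point.
-/

open Set Filter

noncomputable section

/-- The unit interval `[0,1]` as a subtype of `ℝ`. -/
abbrev unitI : Type := Set.Icc (0 : ℝ) 1

/-- `f : [0,1] → [0,1]` is unimodal with critical point `c`: continuous, `c ∈ (0,1)`,
strictly increasing on `[0,c]` and strictly decreasing on `[c,1]`. -/
def Unimodal (f : unitI → unitI) (c : unitI) : Prop :=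
  Continuous f ∧ 0 < (c : ℝ) ∧ (c : ℝ) < 1 ∧
    StrictMonoOn f {x : unitI | x ≤ c} ∧ StrictAntiOn f {x : unitI | c ≤ x}

/-- `f` is locally eventually onto: for every `ε > 0` and every `x`, some iterate of `f`
maps the `ε`-ball about `x` (in `[0,1]`) onto all of `[0,1]`. -/
def LEO (f : unitI → unitI) : Prop :=
  ∀ ε : ℝ, 0 < ε → ∀ x : unitI, ∃ N : ℕ, f^[N] '' Metric.ball x ε = Set.univ

/-- The omega-limit set of `c` under `f`: `⋂ₙ closure {fᵐ(c) : m ≥ n}`. -/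
def omegaLimitSet (f : unitI → unitI) (c : unitI) : Set unitI :=
  ⋂ n : ℕ, closure {y : unitI | ∃ m : ℕ, n ≤ m ∧ f^[m] c = y}

/-- The inverse limit of `f`, as a subset of the product `ℕ → [0,1]`
(the subspace topology coincides with the topology induced by the usual metric). -/
def InvLim (f : unitI → unitI) : Set (ℕ → unitI) :=
  {x | ∀ i : ℕ, f (x (i + 1)) = x i}

/-- The set of inhomogeneities: points of the inverse limit all of whose
coordinates lie in the postcritical omega-limit set. -/
def Inhom (f : unitI → unitI) (c : unitI) : Set (InvLim f) :=
  {x | ∀ n : ℕ, (x : ℕ → unitI) n ∈ omegaLimitSet f c}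

/-- The ordinal space `{ξ : ξ ≤ o}` with its order topology. -/
def OrdSpace (o : Ordinal) : Type _ := Set.Iic o

instance (o : Ordinal) : LinearOrder (OrdSpace o) :=
  inferInstanceAs (LinearOrder (Set.Iic o))

instance (o : Ordinal) : TopologicalSpace (OrdSpace o) := Preorder.topology (OrdSpace o)

instance (o : Ordinal) : OrderTopology (OrdSpace o) := ⟨rfl⟩

/-- `X ≃ ω^γ·k + 1` in the sense of the paper: `X` is homeomorphic to the
ordinal space `{ξ : ξ ≤ o}` with its order topology. -/
def HomeoOrd (X : Type*) [TopologicalSpace X] (o : Ordinal) : Prop :=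
  Nonempty (X ≃ₜ OrdSpace o)

open scoped Topology
open Ordinal

universe u

/-! ### Cantor–Bendixson derivatives -/

/-- `cbDeriv X γ` is the `γ`-th Cantor–Bendixson derivative of the space `X`, in the uniform
form: the points that are accumulation points of every earlier derivative. The ordinal may live in
any universe, independently of `X`. -/
def cbDeriv (X : Type*) [TopologicalSpace X] (γ : Ordinal.{u}) : Set X :=
  {x | ∀ β, ∀ _ : β < γ, AccPt x (𝓟 (cbDeriv X β))}
termination_by γ

theorem mem_cbDeriv {X : Type*} [TopologicalSpace X] {γ : Ordinal.{u}} {x : X} :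
    x ∈ cbDeriv X γ ↔ ∀ β < γ, AccPt x (𝓟 (cbDeriv X β)) := by
  rw [cbDeriv]; rfl

theorem cbDeriv_anti {X : Type*} [TopologicalSpace X] {β γ : Ordinal.{u}} (h : β ≤ γ) :
    cbDeriv X γ ⊆ cbDeriv X β := fun _ hx =>
  mem_cbDeriv.2 fun δ hδ => mem_cbDeriv.1 hx δ (hδ.trans_le h)

/-- An accumulation point of `f '' E` lifts to an accumulation point of `E`, by compactness. -/
theorem exists_accPt_of_surj {X Y : Type*} [TopologicalSpace X] [TopologicalSpace Y]
    [CompactSpace X] [T2Space Y] {f : X → Y} (hf : Continuous f) {E : Set X} {D : Set Y}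
    (hED : D ⊆ f '' E) {y : Y} (hy : AccPt y (𝓟 D)) : ∃ x, f x = y ∧ AccPt x (𝓟 E) := by
  have hne : (comap f (𝓝[≠] y) ⊓ 𝓟 E).NeBot := by
    rw [inf_principal_neBot_iff]
    rintro U ⟨V, hV, hVU⟩
    obtain ⟨_, hzV, hzD⟩ := inf_principal_neBot_iff.1 hy V hV
    obtain ⟨x, hxE, rfl⟩ := hED hzD
    exact ⟨x, hVU hzV, hxE⟩
  obtain ⟨x, hx⟩ := exists_clusterPt_of_compactSpace (comap f (𝓝[≠] y) ⊓ 𝓟 E)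
  have hxy : f x = y := by
    have h1 : Tendsto f (comap f (𝓝[≠] y) ⊓ 𝓟 E) (𝓝 y) :=
      (tendsto_comap.mono_left inf_le_left).mono_right nhdsWithin_le_nhds
    have h2 : (𝓝 (f x) ⊓ 𝓝 y).NeBot := hx.map hf.continuousAt h1
    exact eq_of_nhds_neBot h2
  refine ⟨x, hxy, NeBot.mono hx ?_⟩
  refine le_inf (le_inf inf_le_left ?_) (inf_le_right.trans inf_le_right)
  refine inf_le_right.trans (inf_le_left.trans ?_)
  rw [le_principal_iff]
  refine ⟨{y}ᶜ, self_mem_nhdsWithin, ?_⟩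
  rintro z hz rfl
  exact hz hxy

/-- A continuous surjection of compact Hausdorff spaces covers each Cantor–Bendixson derivative of
the target by the corresponding derivative of the source. The accumulation sets in the fibre, one
for each smaller index, are nested and compact, so a single point serves them all. -/
theorem cbDeriv_subset_image {X Y : Type*} [TopologicalSpace X] [TopologicalSpace Y]
    [CompactSpace X] [T2Space X] [T2Space Y] {f : X → Y} (hf : Continuous f)
    (hs : Function.Surjective f) (γ : Ordinal.{u}) : cbDeriv Y γ ⊆ f '' cbDeriv X γ := by
  induction γ using WellFoundedLT.induction with
  | _ γ ih =>
  intro y hy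
  rcases eq_or_ne γ 0 with rfl | h0
  · obtain ⟨x, rfl⟩ := hs y
    exact ⟨x, mem_cbDeriv.2 fun β hβ => absurd hβ (by simp), rfl⟩
  have : Nonempty (Iio γ) := ⟨⟨0, pos_iff_ne_zero.2 h0⟩⟩
  have key : (⋂ β : Iio γ, f ⁻¹' {y} ∩ derivedSet (cbDeriv X (β : Ordinal.{u}))).Nonempty := by
    have hcl : ∀ β : Iio γ, IsClosed (f ⁻¹' {y} ∩ derivedSet (cbDeriv X (β : Ordinal.{u}))) :=
      fun β => (isClosed_singleton.preimage hf).inter (isClosed_derivedSet _)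
    refine IsCompact.nonempty_iInter_of_directed_nonempty_isCompact_isClosed _ ?_ ?_
      (fun β => (hcl β).isCompact) hcl
    · refine directed_of_isDirected_le fun β δ h => inter_subset_inter_right _ ?_
      exact derivedSet_mono _ _ (cbDeriv_anti h)
    · rintro ⟨β, hβ⟩
      exact exists_accPt_of_surj hf (ih β hβ) (mem_cbDeriv.1 hy β hβ)
  obtain ⟨x, hx⟩ := key
  rw [mem_iInter] at hx
  exact ⟨x, mem_cbDeriv.2 fun β hβ => (hx ⟨β, hβ⟩).2, (hx ⟨0, pos_iff_ne_zero.2 h0⟩).1⟩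

theorem Homeomorph.image_cbDeriv {X Y : Type*} [TopologicalSpace X] [TopologicalSpace Y]
    [CompactSpace X] [T2Space X] (e : X ≃ₜ Y) (γ : Ordinal.{u}) :
    e '' cbDeriv X γ = cbDeriv Y γ := by
  have := e.compactSpace
  have := e.t2Space
  refine Subset.antisymm ?_ (cbDeriv_subset_image e.continuous e.surjective γ)
  rintro _ ⟨x, hx, rfl⟩
  obtain ⟨y, hy, rfl⟩ := cbDeriv_subset_image e.symm.continuous e.symm.surjective γ hx
  simpa using hy

/-! ### Derivatives of ordinal spaces -/

theorem opow_dvd_of_cofinal {β ξ : Ordinal.{u}}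
    (h : ∀ η < ξ, ∃ ζ, ω ^ β ∣ ζ ∧ η < ζ ∧ ζ < ξ) : ω ^ (β + 1) ∣ ξ := by
  have hb : (ω : Ordinal.{u}) ^ β ≠ 0 := pos_iff_ne_zero.1 (opow_pos β omega0_pos)
  -- no multiple of `ω ^ β` lies strictly between `ω ^ β * ε` and `ω ^ β * (ε + 1)`
  have gap : ∀ ε, ω ^ β * ε < ξ → ω ^ β * (ε + 1) < ξ := by
    intro ε hε
    obtain ⟨ζ, ⟨δ, rfl⟩, h1, h2⟩ := h _ hε
    refine lt_of_le_of_lt (mul_le_mul_right (Order.add_one_le_of_lt ?_) _) h2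
    exact (mul_lt_mul_iff_right₀ (pos_iff_ne_zero.2 hb)).1 h1
  have hd : ω ^ β * (ξ / ω ^ β) = ξ := by
    refine (mul_div_le _ _).eq_of_not_lt fun hlt => ?_
    exact (gap _ hlt).not_ge (lt_mul_succ_div ξ hb).le
  rw [opow_add, opow_one, ← hd]
  refine mul_dvd_mul_left _ (isSuccPrelimit_iff_omega0_dvd.1 ?_)
  rw [Order.isSuccPrelimit_iff_succ_lt]
  intro ε hε
  have h1 : ω ^ β * ε < ξ := hd ▸ mul_lt_mul_of_pos_left hε (pos_iff_ne_zero.2 hb)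
  have h2 := gap ε h1
  rw [← hd] at h2
  exact (mul_lt_mul_iff_right₀ (pos_iff_ne_zero.2 hb)).1 h2

/-- A nonzero ordinal is divisible by `ω ^ γ` iff, for every `β < γ`, the multiples of `ω ^ β` are
cofinal below it. -/
theorem opow_dvd_iff_cofinal {γ ξ : Ordinal.{u}} (hγ : γ ≠ 0) (h0 : ξ ≠ 0) :
    ω ^ γ ∣ ξ ↔ ∀ β < γ, ∀ η < ξ, ∃ ζ, ω ^ β ∣ ζ ∧ η < ζ ∧ ζ < ξ := by
  constructor
  · rintro ⟨δ, rfl⟩ β hβ η hη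
    have hb : (ω : Ordinal.{u}) ^ β ≠ 0 := pos_iff_ne_zero.1 (opow_pos β omega0_pos)
    refine ⟨ω ^ β * (η / ω ^ β + 1), dvd_mul_right _ _, lt_mul_succ_div η hb, ?_⟩
    obtain ⟨ε, hε⟩ : ω ^ β * ω ∣ ω ^ γ * δ := by
      rw [← opow_succ]
      exact (opow_dvd_opow _ (Order.succ_le_of_lt hβ)).mul_right _
    rw [hε, mul_assoc] at hη ⊢
    refine mul_lt_mul_of_pos_left ?_ (pos_iff_ne_zero.2 hb)
    refine (isSuccPrelimit_iff_omega0_dvd.2 (dvd_mul_right ω ε)).add_one_lt ?_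
    rwa [← lt_mul_iff_div_lt hb]
  · intro h
    have h' : ∀ β < γ, ω ^ (β + 1) ∣ ξ := fun β hβ => opow_dvd_of_cofinal (h β hβ)
    rcases zero_or_succ_or_isSuccLimit γ with rfl | ⟨δ, rfl⟩ | hl
    · exact absurd rfl hγ
    · exact h' δ (Order.lt_succ δ)
    · rw [← div_add_mod ξ (ω ^ γ)]
      have hmod := mod_lt ξ (opow_pos γ omega0_pos).ne'
      obtain ⟨β, hβ, hlt⟩ := (lt_opow_of_isSuccLimit omega0_ne_zero hl).1 hmod
      have hd : ω ^ β ∣ ξ % ω ^ γ := by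
        refine (dvd_add_iff ((opow_dvd_opow ω hβ.le).mul_right (ξ / ω ^ γ))).1 ?_
        rw [div_add_mod]
        exact (opow_dvd_opow ω (le_add_right le_rfl)).trans (h' β hβ)
      have : ξ % ω ^ γ = 0 := by
        by_contra hne
        exact (le_of_dvd hne hd).not_gt hlt
      rw [this, add_zero]
      exact dvd_mul_right _ _

/-- The inclusion of an ordinal space in the ordinals. -/
def OrdSpace.val {o : Ordinal.{u}} (x : OrdSpace o) : Ordinal.{u} := Subtype.val x

theorem OrdSpace.isOpenEmbedding_val {o : Ordinal.{u}} :
    Topology.IsOpenEmbedding (OrdSpace.val (o := o)) := by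
  have h : (instTopologicalSpaceSubtype : TopologicalSpace (Iic o)) = Preorder.topology (Iic o) :=
    OrderTopology.topology_eq_generate_intervals
  have ho : IsOpen (Iic o) := by
    rw [← Order.Iio_succ]
    exact isOpen_Iio
  have := ho.isOpenEmbedding_subtypeVal
  rw [h] at this
  exact this

theorem OrdSpace.accPt_iff {o : Ordinal.{u}} {x : OrdSpace o} {s : Set (OrdSpace o)} :
    AccPt x (𝓟 s) ↔ x.val ≠ 0 ∧ ∀ η < x.val, ∃ z ∈ s, η < z.val ∧ z.val < x.val := by
  have hs : 𝓟 s = comap OrdSpace.val (𝓟 (OrdSpace.val '' s)) := by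
    rw [comap_principal, preimage_image_eq s OrdSpace.isOpenEmbedding_val.injective]
  rw [hs, OrdSpace.isOpenEmbedding_val.accPt_comap_iff]
  refine SuccOrder.accPt_principal.trans (and_congr (by simp) (forall₂_congr fun η _ => ?_))
  constructor
  · rintro ⟨_, ⟨z, hz, rfl⟩, h1, h2⟩
    exact ⟨z, hz, h1, h2⟩
  · rintro ⟨z, hz, h1, h2⟩
    exact ⟨z.val, ⟨z, hz, rfl⟩, h1, h2⟩

/-- For `γ ≠ 0` the `γ`-th derivative of an ordinal space is its set of nonzero multiples of
`ω ^ γ`; for `γ = 0` it is everything, including `0`. -/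
theorem OrdSpace.mem_cbDeriv_iff {o γ : Ordinal.{u}} {x : OrdSpace o} :
    x ∈ cbDeriv (OrdSpace o) γ ↔ γ = 0 ∨ (x.val ≠ 0 ∧ ω ^ γ ∣ x.val) := by
  induction γ using WellFoundedLT.induction generalizing x with
  | _ γ ih =>
  rcases eq_or_ne γ 0 with rfl | hγ
  · simp [mem_cbDeriv]
  simp only [hγ, false_or]
  rw [mem_cbDeriv]
  by_cases h0 : x.val = 0
  · simp only [h0, ne_eq, not_true_eq_false, false_and, iff_false]
    intro h
    exact (accPt_iff.1 (h 0 (pos_iff_ne_zero.2 hγ))).1 h0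
  rw [opow_dvd_iff_cofinal hγ h0]
  simp only [ne_eq, h0, not_false_eq_true, true_and]
  refine forall₂_congr fun β hβ => ?_
  rw [accPt_iff]
  simp only [ne_eq, h0, not_false_eq_true, true_and]
  refine forall₂_congr fun η hη => ?_
  constructor
  · rintro ⟨z, hz, h1, h2⟩
    refine ⟨z.val, ?_, h1, h2⟩
    rcases (ih β hβ).1 hz with rfl | h
    · simp
    · exact h.2
  · rintro ⟨ζ, hd, h1, h2⟩
    exact ⟨⟨ζ, h2.le.trans x.2⟩, (ih β hβ).2 (Or.inr ⟨(zero_le.trans_lt h1).ne', hd⟩), h1, h2⟩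

theorem OrdSpace.ncard_cbDeriv {γ : Ordinal.{u}} (hγ : γ ≠ 0) (k : ℕ) :
    (cbDeriv (OrdSpace (ω ^ γ * k)) γ).Finite ∧ (cbDeriv (OrdSpace (ω ^ γ * k)) γ).ncard = k := by
  have hpos : (0 : Ordinal.{u}) < ω ^ γ := opow_pos γ omega0_pos
  let φ : Fin k → OrdSpace (ω ^ γ * k) := fun j => ⟨ω ^ γ * ((j + 1 : ℕ) : Ordinal),
    mem_Iic.2 (mul_le_mul_right (Nat.cast_le.2 j.2) _)⟩
  have hφ : Function.Injective φ := by
    intro i j hij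
    have h1 : ω ^ γ * ((i + 1 : ℕ) : Ordinal.{u}) = ω ^ γ * ((j + 1 : ℕ) : Ordinal) :=
      congrArg OrdSpace.val hij
    have h2 := Nat.cast_injective (mul_left_cancel₀ hpos.ne' h1)
    exact Fin.ext (by omega)
  have hr : cbDeriv (OrdSpace (ω ^ γ * k)) γ = range φ := by
    ext x
    rw [mem_cbDeriv_iff]
    simp only [hγ, false_or]
    constructor
    · rintro ⟨h0, δ, hδ⟩
      have hle : δ ≤ k := by
        have : ω ^ γ * δ ≤ ω ^ γ * k := hδ ▸ x.2
        exact (mul_le_mul_iff_right₀ hpos).1 this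
      obtain ⟨j, rfl⟩ := lt_omega0.1 (hle.trans_lt (natCast_lt_omega0 k))
      have hj : j ≠ 0 := by rintro rfl; simp [hδ] at h0
      have hjk : j ≤ k := Nat.cast_le.1 hle
      refine ⟨⟨j - 1, by omega⟩, Subtype.ext ?_⟩
      change ω ^ γ * ((j - 1 + 1 : ℕ) : Ordinal) = x.val
      rw [hδ, Nat.sub_add_cancel (by omega)]
    · rintro ⟨j, rfl⟩
      exact ⟨mul_ne_zero hpos.ne' (by simp), dvd_mul_right _ _⟩
  rw [hr]
  refine ⟨finite_range φ, ?_⟩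
  rw [← image_univ, ncard_image_of_injective _ hφ, ncard_univ, Nat.card_fin]

/-! ### The omega-limit set and its threads -/

theorem isClosed_omegaLimitSet (g : unitI → unitI) (c : unitI) :
    IsClosed (omegaLimitSet g c) := isClosed_iInter fun _ => isClosed_closure

theorem mapsTo_omegaLimitSet {g : unitI → unitI} (hg : Continuous g) (c : unitI) :
    MapsTo g (omegaLimitSet g c) (omegaLimitSet g c) := by
  intro x hx
  rw [omegaLimitSet, mem_iInter] at hx ⊢
  intro n
  refine map_mem_closure hg (hx n) ?_
  rintro _ ⟨m, hm, rfl⟩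
  exact ⟨m + 1, by omega, Function.iterate_succ_apply' g m c⟩

/-- Every point of `ω(c)` has a preimage in `ω(c)`: the preimages lying in the closures of the
tails of the orbit form a nested family of nonempty compact sets. -/
theorem surjOn_omegaLimitSet {g : unitI → unitI} (hg : Continuous g) (c : unitI) :
    SurjOn g (omegaLimitSet g c) (omegaLimitSet g c) := by
  intro y hy
  rw [omegaLimitSet, mem_iInter] at hy
  let K : ℕ → Set unitI := fun n => g ⁻¹' {y} ∩ closure {z | ∃ m : ℕ, n ≤ m ∧ g^[m] c = z}
  have hcl : ∀ n, IsClosed (K n) :=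
    fun n => (isClosed_singleton.preimage hg).inter isClosed_closure
  have hne : (⋂ n, K n).Nonempty := by
    refine IsCompact.nonempty_iInter_of_directed_nonempty_isCompact_isClosed _ ?_ ?_
      (fun n => (hcl n).isCompact) hcl
    · refine directed_of_isDirected_le fun i j hij => inter_subset_inter_right _ (closure_mono ?_)
      rintro _ ⟨m, hm, rfl⟩
      exact ⟨m, hij.trans hm, rfl⟩
    · intro n
      have h : closure {z | ∃ m : ℕ, n + 1 ≤ m ∧ g^[m] c = z} ⊆
          g '' closure {z | ∃ m : ℕ, n ≤ m ∧ g^[m] c = z} := by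
        refine closure_minimal ?_ (isClosed_closure.isCompact.image hg).isClosed
        rintro _ ⟨m, hm, rfl⟩
        refine ⟨g^[m - 1] c, subset_closure ⟨m - 1, by omega, rfl⟩, ?_⟩
        rw [← Function.iterate_succ_apply' g, Nat.succ_eq_add_one, Nat.sub_add_cancel (by omega)]
      obtain ⟨x, hx, rfl⟩ := h (hy (n + 1))
      exact ⟨x, rfl, hx⟩
  obtain ⟨x, hx⟩ := hne
  rw [mem_iInter] at hx
  exact ⟨x, mem_iInter.2 fun n => (hx n).2, (hx 0).1⟩

/-- The projection of the set of inhomogeneities to coordinate `0`. -/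
def proj₀ (g : unitI → unitI) (c : unitI) (x : Inhom g c) : omegaLimitSet g c :=
  ⟨x.1.1 0, x.2 0⟩

theorem continuous_proj₀ (g : unitI → unitI) (c : unitI) : Continuous (proj₀ g c) := by
  refine Continuous.subtype_mk ?_ _
  exact (continuous_apply 0).comp (continuous_subtype_val.comp continuous_subtype_val)

theorem surjective_proj₀ {g : unitI → unitI} (hg : Continuous g) (c : unitI) :
    Function.Surjective (proj₀ g c) := by
  have hs : ∀ y : omegaLimitSet g c, ∃ x : omegaLimitSet g c, g x = y := fun y => by
    obtain ⟨x, hx, h⟩ := surjOn_omegaLimitSet hg c y.2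
    exact ⟨⟨x, hx⟩, h⟩
  choose r hr using hs
  intro y
  refine ⟨⟨⟨fun i => (r^[i] y : omegaLimitSet g c), fun i => ?_⟩, fun i => (r^[i] y).2⟩, rfl⟩
  change g (r^[i + 1] y : omegaLimitSet g c) = _
  rw [Function.iterate_succ_apply', hr]

theorem compactSpace_inhom {g : unitI → unitI} (hg : Continuous g) (c : unitI) :
    CompactSpace (Inhom g c) := by
  have h1 : IsClosed (InvLim g) := by
    have : InvLim g = ⋂ i : ℕ, {x | g (x (i + 1)) = x i} := by ext; simp [InvLim]
    rw [this]
    exact isClosed_iInter fun i => isClosed_eq (by fun_prop) (by fun_prop)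
  have : CompactSpace (InvLim g) := isCompact_iff_compactSpace.1 h1.isCompact
  have h2 : IsClosed (Inhom g c) := by
    have : Inhom g c = ⋂ i : ℕ, (fun x : InvLim g => x.1 i) ⁻¹' omegaLimitSet g c := by
      ext; simp [Inhom]
    rw [this]
    exact isClosed_iInter fun i => (isClosed_omegaLimitSet g c).preimage
      ((continuous_apply i).comp continuous_subtype_val)
  exact isCompact_iff_compactSpace.1 h2.isCompact

/-- The homeomorphism induced by `g` on the set of inhomogeneities: it applies `g` in every
coordinate, and its inverse drops the coordinate `0`. -/
def shift {g : unitI → unitI} (hg : Continuous g) (c : unitI) : Inhom g c ≃ₜ Inhom g c where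
  toFun x := ⟨⟨fun i => g (x.1.1 i), fun i => congrArg g (x.1.2 i)⟩,
    fun i => mapsTo_omegaLimitSet hg c (x.2 i)⟩
  invFun x := ⟨⟨fun i => x.1.1 (i + 1), fun i => x.1.2 (i + 1)⟩, fun i => x.2 (i + 1)⟩
  left_inv x := Subtype.ext (Subtype.ext (funext fun i => x.1.2 i))
  right_inv x := Subtype.ext (Subtype.ext (funext fun i => x.1.2 i))
  continuous_toFun := ((continuous_pi fun i => hg.comp ((continuous_apply i).comp
    (continuous_subtype_val.comp continuous_subtype_val))).subtype_mk _).subtype_mk _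
  continuous_invFun := ((continuous_pi fun i => (continuous_apply (i + 1)).comp
    (continuous_subtype_val.comp (continuous_subtype_val (p := (· ∈ Inhom g c))))).subtype_mk _).subtype_mk _

theorem inhom_ext {g : unitI → unitI} {c : unitI} {x y : Inhom g c}
    (h : ∀ i, x.1.1 i = y.1.1 i) : x = y :=
  Subtype.ext (Subtype.ext (funext h))

theorem shift_iterate_apply {g : unitI → unitI} (hg : Continuous g) (c : unitI) (k : ℕ)
    (x : Inhom g c) (i : ℕ) : ((shift hg c)^[k] x).1.1 i = g^[k] (x.1.1 i) := by
  induction k with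
  | zero => rfl
  | succ k ih =>
    rw [Function.iterate_succ_apply', Function.iterate_succ_apply', ← ih]
    rfl

/-- A thread of period dividing 2 is determined by its coordinate `0`. -/
theorem eq_of_shift_shift {g : unitI → unitI} (hg : Continuous g) {c : unitI} {x y : Inhom g c}
    (hx : shift hg c (shift hg c x) = x) (hy : shift hg c (shift hg c y) = y)
    (h : x.1.1 0 = y.1.1 0) : x = y := by
  refine inhom_ext fun i => ?_
  induction i with
  | zero => exact h
  | succ i ih =>
    have hx' : g (g (x.1.1 (i + 1))) = x.1.1 (i + 1) := congrArg (fun z => z.1.1 (i + 1)) hx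
    have hy' : g (g (y.1.1 (i + 1))) = y.1.1 (i + 1) := congrArg (fun z => z.1.1 (i + 1)) hy
    rw [← hx', ← hy', x.1.2 i, y.1.2 i, ih]

/-- A thread in a finite shift-invariant set is periodic, so if it starts at a point of period
dividing 2 it only visits the orbit of that point. -/
theorem shift_shift_of_cycle {g : unitI → unitI} (hg : Continuous g) {c : unitI}
    {S : Set (Inhom g c)} (hS : S.Finite) (hSS : shift hg c '' S = S) {s : Inhom g c} (hs : s ∈ S)
    (h : g (g (s.1.1 0)) = s.1.1 0) : shift hg c (shift hg c s) = s := by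
  have hmaps : ∀ k, (shift hg c)^[k] s ∈ S := by
    intro k
    induction k with
    | zero => exact hs
    | succ k ih =>
      rw [Function.iterate_succ_apply', ← hSS]
      exact mem_image_of_mem _ ih
  obtain ⟨i, j, hij, he⟩ : ∃ i j, i < j ∧ (shift hg c)^[i] s = (shift hg c)^[j] s := by
    have := hS.to_subtype
    obtain ⟨i, j, hne, he⟩ :=
      Finite.exists_ne_map_eq_of_infinite (fun k : ℕ => (⟨_, hmaps k⟩ : S))
    have he' := congrArg Subtype.val he
    rcases hne.lt_or_gt with h | h
    · exact ⟨i, j, h, he'⟩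
    · exact ⟨j, i, h, he'.symm⟩
  have hper : (shift hg c)^[j - i] s = s := by
    have : (shift hg c)^[i] ((shift hg c)^[j - i] s) = (shift hg c)^[i] s := by
      rw [← Function.iterate_add_apply, Nat.add_sub_cancel' hij.le, he]
    exact (shift hg c).injective.iterate i this
  obtain ⟨k, hk⟩ : ∃ k, j - i = k + 1 := ⟨j - i - 1, by omega⟩
  rw [hk] at hper
  have hcoord : ∀ l, g (g (s.1.1 l)) = s.1.1 l := by
    intro l
    induction l with
    | zero => exact h
    | succ l ih =>
      have h1 : s.1.1 (l + 1) = g^[k] (s.1.1 l) := by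
        conv_lhs => rw [← hper]
        rw [shift_iterate_apply, Function.iterate_succ_apply, s.1.2 l]
      rw [h1, ← Function.iterate_succ_apply' g, ← Function.iterate_succ_apply' g,
        Function.iterate_succ_apply, Function.iterate_succ_apply, ih]
  exact inhom_ext hcoord

/-! ### Fixed points and 2-cycles of `g` -/

theorem exists_small_surj {g : unitI → unitI} (hl : LEO g) (x : unitI) {ε : ℝ} (hε : 0 < ε)
    (h : Metric.ball x ε ≠ Set.univ) : ∃ N, g^[N + 1] '' Metric.ball x ε = Set.univ := by
  obtain ⟨N, hN⟩ := hl ε hε x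
  cases N with
  | zero => exact absurd (by simpa using hN) h
  | succ N => exact ⟨N, hN⟩

/-- A fixed point `y` with `0 < y ≤ c` would make `[0, y]` invariant. -/
theorem not_fixed_of_le {g : unitI → unitI} {c : unitI} (hg : Unimodal g c) (hl : LEO g)
    {y : unitI} (h0 : 0 < y) (hyc : y ≤ c) : g y ≠ y := by
  obtain ⟨hcont, hc0, hc1, hmono, hanti⟩ := hg
  intro hy
  have hinv : MapsTo g (Iic y) (Iic y) := fun z hz => by
    have := hmono.monotoneOn (show z ≤ c from le_trans hz hyc) hyc hz
    rwa [hy] at this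
  obtain ⟨N, hN⟩ := hl y h0 0
  have h1 : (1 : unitI) ∈ g^[N] '' Metric.ball 0 (y : ℝ) := hN ▸ mem_univ _
  obtain ⟨z, hz, hz1⟩ := h1
  have hzy : z ≤ y := by
    rw [Metric.mem_ball, Subtype.dist_eq, Real.dist_eq] at hz
    have := (abs_lt.1 hz).2
    rw [Set.Icc.coe_zero, _root_.sub_zero] at this
    exact this.le
  have h2 : g^[N] z ≤ y := hinv.iterate N hzy
  rw [hz1] at h2
  have h3 : (1 : ℝ) ≤ c := le_trans (show (1 : ℝ) ≤ y from h2) hyc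
  linarith

/-- If `0` is fixed, then locally eventually onto forces `c ↦ 1 ↦ 0 ↦ 0`. -/
theorem omegaLimitSet_of_fixed_zero {g : unitI → unitI} {c : unitI} (hg : Unimodal g c)
    (hl : LEO g) (h0 : g 0 = 0) : omegaLimitSet g c ⊆ {0} := by
  obtain ⟨hcont, hc0, hc1, hmono, hanti⟩ := hg
  have hc0' : (0 : unitI) < c := hc0
  have hball : Metric.ball c (c : ℝ) ⊆ {0}ᶜ := by
    rintro z hz rfl
    rw [Metric.mem_ball, Subtype.dist_eq, Real.dist_eq] at hz
    simp [abs_of_pos hc0] at hz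
  obtain ⟨N, hN⟩ := exists_small_surj hl c hc0 (fun h => by
    have : (0 : unitI) ∈ Metric.ball c (c : ℝ) := h ▸ mem_univ _
    exact hball this rfl)
  -- the value `1` is attained, hence attained at `c`
  have hgc : g c = 1 := by
    have : (1 : unitI) ∈ g^[N + 1] '' Metric.ball c (c : ℝ) := hN ▸ mem_univ _
    obtain ⟨z, -, hz⟩ := this
    rw [Function.iterate_succ_apply'] at hz
    refine le_antisymm (g c).2.2 ?_
    rw [← hz]
    rcases le_total (g^[N] z) c with h | h
    · exact hmono.monotoneOn h (le_refl c) h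
    · exact hanti.antitoneOn (le_refl c) h h
  -- `0` has a preimage other than itself, which forces `g 1 = 0`
  have hw : ∃ w : unitI, w ≠ 0 ∧ g w = 0 := by
    by_contra! hcon
    have hinv : MapsTo g {0}ᶜ {0}ᶜ := fun w hw => hcon w hw
    have : (0 : unitI) ∈ g^[N + 1] '' Metric.ball c (c : ℝ) := hN ▸ mem_univ _
    obtain ⟨z, hz, hz0⟩ := this
    exact hinv.iterate (N + 1) (hball hz) hz0
  obtain ⟨w, hw0, hgw⟩ := hw
  have hcw : c ≤ w := by
    by_contra! hlt
    have := hmono (show (0 : unitI) ≤ c from hc0'.le) hlt.le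
      (lt_of_le_of_ne w.2.1 (Ne.symm hw0) : (0 : unitI) < w)
    rw [h0, hgw] at this
    exact lt_irrefl _ this
  have hg1 : g 1 = 0 := by
    have h := hanti.antitoneOn hcw (show c ≤ 1 from c.2.2) (show w ≤ 1 from w.2.2)
    rw [hgw] at h
    exact le_antisymm h (g 1).2.1
  have hiter : ∀ k, g^[k + 2] c = 0 := by
    intro k
    induction k with
    | zero => simp [hgc, hg1]
    | succ k ih => rw [show k + 1 + 2 = (k + 2) + 1 from rfl, Function.iterate_succ_apply', ih, h0]
  intro x hx
  rw [omegaLimitSet, mem_iInter] at hx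
  have : closure {y : unitI | ∃ m : ℕ, 2 ≤ m ∧ g^[m] c = y} ⊆ {0} := by
    refine closure_minimal ?_ isClosed_singleton
    rintro _ ⟨m, hm, rfl⟩
    obtain ⟨k, rfl⟩ := Nat.exists_eq_add_of_le' hm
    exact hiter k
  exact this (hx 2)

theorem fixed_unique {g : unitI → unitI} {c : unitI} (hg : Unimodal g c) (hl : LEO g)
    (h0 : g 0 ≠ 0) {x y : unitI} (hx : g x = x) (hy : g y = y) : x = y := by
  have hgt : ∀ z, g z = z → c < z := by
    intro z hz
    by_contra! hle
    rcases eq_or_lt_of_le (show (0 : unitI) ≤ z from z.2.1) with rfl | hpos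
    · exact h0 hz
    · exact not_fixed_of_le hg hl hpos hle hz
  obtain ⟨-, -, -, -, hanti⟩ := hg
  have key : ∀ {u v}, g u = u → g v = v → ¬ u < v := by
    intro u v hu hv huv
    have := hanti (hgt u hu).le (hgt v hv).le huv
    rw [hu, hv] at this
    exact lt_asymm this huv
  exact le_antisymm (not_lt.1 (key hy hx)) (not_lt.1 (key hx hy))

/-- In a 2-cycle `x < y`, the critical point separates `x` from `y`. -/
theorem cycle_sep {g : unitI → unitI} {c : unitI} (hg : Unimodal g c) (hl : LEO g)
    {x y : unitI} (hxy : x < y) (h1 : g x = y) (h2 : g y = x) : x ≤ c ∧ c ≤ y := by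
  obtain ⟨-, -, -, hmono, hanti⟩ := hg
  constructor
  · by_contra! hcx
    have hinv : MapsTo g (Icc x y) (Icc x y) := fun z hz => by
      have ha := hanti.antitoneOn hcx.le (hcx.le.trans hz.1) hz.1
      have hb := hanti.antitoneOn (hcx.le.trans hz.1) (hcx.le.trans hxy.le) hz.2
      rw [h1] at ha
      rw [h2] at hb
      exact ⟨hb, ha⟩
    obtain ⟨N, hN⟩ := hl ((y - x) / 2) (by have : (x : ℝ) < y := hxy; linarith)
      ⟨(x + y) / 2, by have := x.2.1; have := y.2.1; linarith,
        by have := x.2.2; have := y.2.2; linarith⟩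
    have h0 : (0 : unitI) ∈ (univ : Set unitI) := mem_univ _
    rw [← hN] at h0
    obtain ⟨z, hz, hz0⟩ := h0
    have hzxy : z ∈ Icc x y := by
      rw [Metric.mem_ball, Subtype.dist_eq, Real.dist_eq, abs_lt] at hz
      obtain ⟨ha, hb⟩ := hz
      simp only at ha hb
      constructor
      · change (x : ℝ) ≤ z; linarith
      · change (z : ℝ) ≤ y; linarith
    have h3 := (hinv.iterate N hzxy).1
    rw [hz0] at h3
    exact (lt_of_le_of_lt (show (0 : unitI) ≤ c from c.2.1) hcx).not_ge h3
  · by_contra! hyc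
    have := hmono (hxy.le.trans hyc.le) hyc.le hxy
    rw [h1, h2] at this
    exact lt_asymm this hxy

/-- There is at most one 2-cycle. -/
theorem cycle_unique {g : unitI → unitI} {c : unitI} (hg : Unimodal g c) (hl : LEO g)
    {x y : unitI} (hx : g (g x) = x) (hy : g (g y) = y) (hx1 : g x ≠ x) (hy1 : g y ≠ y) :
    y = x ∨ y = g x := by
  -- two 2-cycles with lower points `u < v` are impossible: `g` preserves the order of the
  -- lower points and reverses that of the upper ones
  have key : ∀ {u v}, u < g u → v < g v → g (g u) = u → g (g v) = v → ¬ u < v := by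
    intro u v hu hv hu2 hv2 huv
    obtain ⟨a1, a2⟩ := cycle_sep hg hl hu rfl hu2
    obtain ⟨b1, b2⟩ := cycle_sep hg hl hv rfl hv2
    obtain ⟨-, -, -, hmono, hanti⟩ := hg
    have := hanti a2 b2 (hmono a1 b1 huv)
    rw [hu2, hv2] at this
    exact lt_asymm this huv
  have eq : ∀ {u v}, u < g u → v < g v → g (g u) = u → g (g v) = v → u = v := fun h1 h2 h3 h4 =>
    le_antisymm (not_lt.1 (key h2 h1 h4 h3)) (not_lt.1 (key h1 h2 h3 h4))
  rcases hx1.lt_or_gt with h | h <;> rcases hy1.lt_or_gt with h' | h'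
  · have := eq (u := g x) (v := g y) (by rwa [hx]) (by rwa [hy]) (by rw [hx]) (by rw [hy])
    left; rw [← hx, ← hy, this]
  · right; exact (eq (u := g x) (by rwa [hx]) h' (by rw [hx]) hy).symm
  · right; rw [← hy, eq h (v := g y) (by rwa [hy]) hx (by rw [hy])]
  · left; exact (eq h h' hx hy).symm

/-! ### The top derivatives of the omega-limit set and of the inhomogeneities -/

theorem stmt3 (α : Ordinal) (hα2 : 2 ≤ α) (hαc : α.card ≤ Cardinal.aleph0)
    (n m : ℕ) (hn : 0 < n) (hm : 0 < m)
    (g : unitI → unitI) (c : unitI) (hg : Unimodal g c) (hleo : LEO g)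
    (homega : HomeoOrd (omegaLimitSet g c) (Ordinal.omega0 ^ (α + 1) * n))
    (hinhom : HomeoOrd (Inhom g c) (Ordinal.omega0 ^ (α + 1) * m)) :
    (n = 1 → m ≠ 2) ∧ (n = 2 → 2 ≤ m ∧ m ≠ 4) ∧ (2 ≤ n → n ≤ m) := by
  obtain ⟨eA⟩ := homega
  obtain ⟨eI⟩ := hinhom
  have hγ : α + 1 ≠ 0 := by simp
  have hgc := hg.1
  have : CompactSpace (omegaLimitSet g c) :=
    isCompact_iff_compactSpace.1 (isClosed_omegaLimitSet g c).isCompact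
  have : CompactSpace (Inhom g c) := compactSpace_inhom hgc c
  set σ := shift hgc c with hσ
  set T := cbDeriv (omegaLimitSet g c) (α + 1) with hT
  set S := cbDeriv (Inhom g c) (α + 1) with hS
  obtain ⟨hTfin, hTn⟩ : T.Finite ∧ T.ncard = n := by
    have h := OrdSpace.ncard_cbDeriv hγ n
    rw [← eA.image_cbDeriv, ncard_image_of_injective _ eA.injective] at h
    exact ⟨Finite.of_finite_image h.1 eA.injective.injOn, h.2⟩
  obtain ⟨hSfin, hSm⟩ : S.Finite ∧ S.ncard = m := by
    have h := OrdSpace.ncard_cbDeriv hγ m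
    rw [← eI.image_cbDeriv, ncard_image_of_injective _ eI.injective] at h
    exact ⟨Finite.of_finite_image h.1 eI.injective.injOn, h.2⟩
  have hSS : σ '' S = S := σ.image_cbDeriv _
  have hσS : ∀ {s}, s ∈ S → σ s ∈ S := fun hs => hSS ▸ mem_image_of_mem σ hs
  have hTS : T ⊆ proj₀ g c '' S :=
    cbDeriv_subset_image (continuous_proj₀ g c) (surjective_proj₀ hgc c) _
  have hTT : ∀ t ∈ T, ∃ t' ∈ T, g t' = (t : unitI) := by
    have hcont : Continuous (MapsTo.restrict g _ _ (mapsTo_omegaLimitSet hgc c)) :=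
      hgc.continuousOn.mapsToRestrict _
    have hsurj := (surjOn_omegaLimitSet hgc c)
    have hsurj' : Function.Surjective (MapsTo.restrict g _ _ (mapsTo_omegaLimitSet hgc c)) :=
      (MapsTo.restrict_surjective_iff _).2 hsurj
    intro t ht
    obtain ⟨t', ht', h⟩ := cbDeriv_subset_image hcont hsurj' _ ht
    exact ⟨t', ht', congrArg Subtype.val h⟩
  have hle : n ≤ m := by
    rw [← hTn, ← hSm]
    exact (ncard_le_ncard hTS (hSfin.image _)).trans (ncard_image_le hSfin)
  -- otherwise `ω(c) = {0}`, whereas the ordinal space has at least two points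
  have h0 : g 0 ≠ 0 := by
    intro h
    have hsub := omegaLimitSet_of_fixed_zero hg hleo h
    have hpos : (0 : Ordinal) < ω ^ (α + 1) * n :=
      mul_pos (opow_pos _ omega0_pos) (by exact_mod_cast hn)
    let a : OrdSpace (ω ^ (α + 1) * n) := ⟨0, hpos.le⟩
    let b : OrdSpace (ω ^ (α + 1) * n) := ⟨ω ^ (α + 1) * n, self_mem_Iic⟩
    have hab : eA.symm a = eA.symm b :=
      Subtype.ext ((hsub (eA.symm a).2).trans (hsub (eA.symm b).2).symm)
    exact hpos.ne (congrArg OrdSpace.val (eA.symm.injective hab))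
  have hfix : ∀ {x y}, g x = x → g y = y → x = y := fun hx hy => fixed_unique hg hleo h0 hx hy
  refine ⟨?_, ?_, fun _ => hle⟩
  · rintro rfl rfl
    obtain ⟨p, hp⟩ := ncard_eq_one.1 hTn
    have hpT : p ∈ T := by rw [hp]; rfl
    have hgp : g p = p := by
      obtain ⟨t', ht', h⟩ := hTT p hpT
      rw [hp, mem_singleton_iff] at ht'
      rwa [ht'] at h
    obtain ⟨s, hs, hsp⟩ := hTS hpT
    have hs0 : s.1.1 0 = p := congrArg Subtype.val hsp
    have hss : σ (σ s) = s := shift_shift_of_cycle hgc hSfin hSS hs (by rw [hs0, hgp, hgp])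
    have hσs : σ s = s := by
      refine eq_of_shift_shift hgc (congrArg σ hss) hss ?_
      change g (s.1.1 0) = s.1.1 0
      rw [hs0, hgp]
    have hcard : (S \ {s}).ncard = 1 := by rw [ncard_sdiff_singleton_of_mem hs, hSm]
    obtain ⟨v, hv⟩ := ncard_eq_one.1 hcard
    have hvS : v ∈ S \ {s} := by rw [hv]; rfl
    have hσv : σ v = v := by
      have : σ v ∈ S \ {s} := ⟨hσS hvS.1, fun h => hvS.2 (σ.injective (h.trans hσs.symm))⟩
      rwa [hv] at this
    refine hvS.2 (eq_of_shift_shift hgc (x := v) (y := s) ((congrArg σ hσv).trans hσv) hss ?_)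
    rw [hs0]
    exact hfix (congrArg (fun z => z.1.1 0) hσv) hgp
  · rintro rfl
    refine ⟨hle, ?_⟩
    rintro rfl
    obtain ⟨a, b, hab, hT2⟩ := ncard_eq_two.1 hTn
    have haT : a ∈ T := by rw [hT2]; simp
    have hbT : b ∈ T := by rw [hT2]; simp
    have hab' : (a : unitI) ≠ b := fun h => hab (Subtype.ext h)
    obtain ⟨hga, hgb⟩ : g a = b ∧ g b = a := by
      obtain ⟨a', ha', h1⟩ := hTT a haT
      obtain ⟨b', hb', h2⟩ := hTT b hbT
      rw [hT2] at ha' hb'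
      rcases ha' with rfl | rfl <;> rcases hb' with rfl | rfl
      · exact absurd (h1.symm.trans h2) hab'
      · exact absurd (hfix h1 h2) hab'
      · exact ⟨h2, h1⟩
      · exact absurd (h1.symm.trans h2) hab'
    obtain ⟨s, hs, hsa⟩ := hTS haT
    have hs0 : s.1.1 0 = a := congrArg Subtype.val hsa
    have hss : σ (σ s) = s := shift_shift_of_cycle hgc hSfin hSS hs (by rw [hs0, hga, hgb])
    have hσs0 : (σ s).1.1 0 = b := by
      change g (s.1.1 0) = b
      rw [hs0, hga]
    have hne : s ≠ σ s := fun h => hab' (by rw [← hs0, ← hσs0, ← h])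
    have hcard : (S \ {s, σ s}).ncard = 2 := by
      rw [ncard_sdiff (by rintro x (rfl | rfl); exacts [hs, hσS hs]), hSm, ncard_pair hne]
    obtain ⟨u, v, huv, hS2⟩ := ncard_eq_two.1 hcard
    have huS : u ∈ S \ {s, σ s} := by rw [hS2]; simp
    have hvS : v ∈ S \ {s, σ s} := by rw [hS2]; simp
    have hinv : ∀ w ∈ S \ {s, σ s}, σ w ∈ S \ {s, σ s} := by
      rintro w ⟨hw, hw'⟩
      refine ⟨hσS hw, ?_⟩
      rintro (h | h)
      · exact hw' (Or.inr (σ.injective (h.trans hss.symm)))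
      · exact hw' (Or.inl (σ.injective h))
    have hσσ : ∀ w ∈ S \ {s, σ s}, σ (σ w) = w := by
      have hu := hinv u huS
      have hv := hinv v hvS
      have hσuv : σ u ≠ σ v := fun h => huv (σ.injective h)
      rw [hS2] at hu hv ⊢
      rcases hu with hu | hu <;> rcases hv with hv | hv
      · exact absurd (hu.trans hv.symm) hσuv
      · rintro w (rfl | rfl)
        exacts [(congrArg σ hu).trans hu, (congrArg σ hv).trans hv]
      · rintro w (rfl | rfl)
        exacts [(congrArg σ hu).trans hv, (congrArg σ hv).trans hu]
      · exact absurd (hu.trans hv.symm) hσuv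
    -- the threads outside the 2-cycle of `s` start at the unique fixed point
    have hfixed : ∀ w ∈ S \ {s, σ s}, g (w.1.1 0) = w.1.1 0 := by
      intro w hw
      have hww := hσσ w hw
      by_contra hnf
      rcases cycle_unique hg hleo (x := a) (by rw [hga, hgb])
        (congrArg (fun z => z.1.1 0) hww : g (g (w.1.1 0)) = w.1.1 0)
        (by rw [hga]; exact hab'.symm) hnf with h | h
      · exact hw.2 (Or.inl (eq_of_shift_shift hgc hww hss (h.trans hs0.symm)))
      · exact hw.2 (Or.inr (eq_of_shift_shift hgc hww (congrArg σ hss)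
          (h.trans (hga.trans hσs0.symm))))
    exact huv (eq_of_shift_shift hgc (hσσ u huS) (hσσ v hvS)
      (hfix (hfixed u huS) (hfixed v hvS)))

end
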